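/- arXiv:1810.04054 — 2 statements merged into one kernel-verified Lean document; each statement's English description precedes it below -/
import Mathlib

section
/- Let α ∈ ℝ. The function w(z) = M(−α/2, 1/2, z) is twice differentiable on ℝ and satisfies Kummer's equation z w''(z) + (1/2 − z) w'(z) + (α/2) w(z) = 0 for all z ∈ ℝ. -/
noncomputable def poch (a : ℝ) (s : ℕ) : ℝ := ∏ i ∈ Finset.range s, (a + i)

/-- Kummer's confluent hypergeometric function `M(a,b,z)`,
defined by the everywhere-convergent series `M(a,b,z) = Σ_{s} (a)_s z^s / ((b)_s s!)`. -/
noncomputable def kummerM (a b z : ℝ) : ℝ :=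
  ∑' s : ℕ, poch a s / (poch b s * (Nat.factorial s)) * z ^ s

/-- Tricomi's confluent hypergeometric function
`U(a,b,z) = (1/Γ(a)) ∫_0^∞ e^{−z t} t^{a−1} (1+t)^{b−a−1} dt`. -/
noncomputable def tricomiU (a b z : ℝ) : ℝ :=
  (1 / Real.Gamma a) *
    ∫ t in Set.Ioi (0:ℝ), Real.exp (-z * t) * t ^ (a - 1) * (1 + t) ^ (b - a - 1)

/-!
The series of `M(a, b, ·)` is everywhere convergent and may be differentiated
term by term, which gives `M'(a, b, z) = (a / b) M(a + 1, b + 1, z)`. The Euler operator `z d/dz`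
multiplies the coefficient of `z ^ n` by `n`, so `z d/dz + a` raises `a` by one and `z d/dz + b - 1`
lowers `b` by one, up to constant factors. Both sides of Kummer's equation in the form
`z w'' + b w' = z w' + a w` are therefore equal to `a M(a + 1, b, z)`.
-/

open Filter Topology FormalMultilinearSeries

section EntirePowerSeries

variable {𝕜 : Type*} [NontriviallyNormedField 𝕜] {c : ℕ → 𝕜}

theorem radius_ofScalars_eq_top_of_summable (hc : ∀ z : 𝕜, Summable fun n => c n * z ^ n) :
    (ofScalars 𝕜 c).radius = ⊤ := by
  refine ENNReal.eq_top_of_forall_nnreal_le fun r => ?_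
  obtain ⟨z, hz⟩ := NormedField.exists_lt_nnnorm 𝕜 r
  refine le_trans (by exact_mod_cast hz.le) (le_radius_of_tendsto (r := ‖z‖₊) (l := 0) _ ?_)
  simpa [ofScalars_norm] using (hc z).tendsto_atTop_zero.norm

theorem hasFPowerSeriesOnBall_tsum_mul_pow (hc : ∀ z : 𝕜, Summable fun n => c n * z ^ n) :
    HasFPowerSeriesOnBall (fun z => ∑' n, c n * z ^ n) (ofScalars 𝕜 c) 0 ⊤ where
  r_le := (radius_ofScalars_eq_top_of_summable hc).ge
  r_pos := ENNReal.zero_lt_top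
  hasSum {z} _ := by simpa only [zero_add, ofScalars_apply_eq, smul_eq_mul] using (hc z).hasSum

variable [CompleteSpace 𝕜]

theorem differentiable_tsum_mul_pow (hc : ∀ z : 𝕜, Summable fun n => c n * z ^ n) :
    Differentiable 𝕜 fun z => ∑' n, c n * z ^ n := by
  simpa [← differentiableOn_univ] using (hasFPowerSeriesOnBall_tsum_mul_pow hc).differentiableOn

theorem hasSum_deriv_tsum_mul_pow (hc : ∀ z : 𝕜, Summable fun n => c n * z ^ n) (z : 𝕜) :
    HasSum (fun n : ℕ => (n + 1) * c (n + 1) * z ^ n) (deriv (fun z => ∑' n, c n * z ^ n) z) := by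
  have hsum := (hasFPowerSeriesOnBall_tsum_mul_pow hc).fderiv.hasSum (y := z) (by simp)
  have hsum_one := hsum.mapL (ContinuousLinearMap.apply 𝕜 𝕜 (1 : 𝕜))
  simpa [mul_comm, mul_left_comm] using hsum_one

theorem hasSum_mul_deriv_tsum_mul_pow (hc : ∀ z : 𝕜, Summable fun n => c n * z ^ n) (z : 𝕜) :
    HasSum (fun n : ℕ => n * c n * z ^ n) (z * deriv (fun z => ∑' n, c n * z ^ n) z) := by
  rw [← hasSum_nat_add_iff' 1]
  simpa [pow_succ', mul_left_comm z] using (hasSum_deriv_tsum_mul_pow hc z).mul_left z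

end EntirePowerSeries

theorem poch_succ (a : ℝ) (n : ℕ) : poch a (n + 1) = poch a n * (a + n) :=
  Finset.prod_range_succ _ n

theorem poch_succ_left (a : ℝ) (n : ℕ) : poch a (n + 1) = a * poch (a + 1) n := by
  simp [poch, Finset.prod_range_succ', mul_comm, add_assoc, add_comm (1 : ℝ)]

theorem poch_ne_zero {b : ℝ} (hb : ∀ m : ℕ, b ≠ -m) (n : ℕ) : poch b n ≠ 0 :=
  Finset.prod_ne_zero_iff.2 fun m _ h => hb m (eq_neg_of_add_eq_zero_left h)

/-- The coefficient `(a)_n / ((b)_n n!)` of `z ^ n` in the series `M(a, b, z)`. It is `0` when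
`(b)_n = 0`. -/
noncomputable def kummerCoeff (a b : ℝ) (n : ℕ) : ℝ := poch a n / (poch b n * n.factorial)

theorem kummerM_eq_tsum (a b : ℝ) : kummerM a b = fun z => ∑' n, kummerCoeff a b n * z ^ n := rfl

theorem kummerCoeff_succ (a b : ℝ) (n : ℕ) :
    kummerCoeff a b (n + 1) = (a + n) / (b + n) * (1 / (n + 1)) * kummerCoeff a b n := by
  simp only [kummerCoeff, poch_succ, Nat.factorial_succ, Nat.cast_mul, Nat.cast_succ,
    div_mul_div_comm]
  congr 1 <;> ring

theorem succ_mul_kummerCoeff_succ (a b : ℝ) (n : ℕ) :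
    (n + 1) * kummerCoeff a b (n + 1) = a / b * kummerCoeff (a + 1) (b + 1) n := by
  simp only [kummerCoeff, poch_succ_left, Nat.factorial_succ, Nat.cast_mul, Nat.cast_succ]
  field_simp

theorem add_mul_kummerCoeff (a b : ℝ) (n : ℕ) :
    (n + a) * kummerCoeff a b n = a * kummerCoeff (a + 1) b n := by
  have hpoch : (n + a) * poch a n = a * poch (a + 1) n := by
    rw [← poch_succ_left, poch_succ]
    ring
  rw [kummerCoeff, kummerCoeff, ← mul_div_assoc, hpoch, mul_div_assoc]

theorem add_mul_kummerCoeff_add_one {b : ℝ} (hb : ∀ m : ℕ, b ≠ -m) (a : ℝ) (n : ℕ) :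
    (n + b) * kummerCoeff a (b + 1) n = b * kummerCoeff a b n := by
  have hpoch : b * poch (b + 1) n = poch b n * (b + n) := by rw [← poch_succ_left, poch_succ]
  have hb_succ : b * poch (b + 1) n ≠ 0 := poch_succ_left b n ▸ poch_ne_zero hb (n + 1)
  have hb_n : poch b n ≠ 0 := poch_ne_zero hb n
  have hb_one : poch (b + 1) n ≠ 0 := right_ne_zero_of_mul hb_succ
  rw [kummerCoeff, kummerCoeff]
  field_simp
  linear_combination -poch a n * hpoch

theorem summable_kummerCoeff_mul_pow (a b z : ℝ) :
    Summable fun n => kummerCoeff a b n * z ^ n := by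
  have hratio : Tendsto (fun n : ℕ => (a + n) / (b + n) * (1 / ((n : ℝ) + 1)) * z) atTop (𝓝 0) := by
    simpa using ((tendsto_add_mul_div_add_mul_atTop_nhds a b 1 one_ne_zero).mul
      tendsto_one_div_add_atTop_nhds_zero_nat).mul_const z
  refine summable_of_ratio_norm_eventually_le one_half_lt_one ?_
  have hsmall := hratio.norm.eventually_le_const (u := 1 / 2) (by simp)
  filter_upwards [hsmall] with n hn
  calc ‖kummerCoeff a b (n + 1) * z ^ (n + 1)‖
      = ‖(a + n) / (b + n) * (1 / ((n : ℝ) + 1)) * z‖ * ‖kummerCoeff a b n * z ^ n‖ := by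
        rw [kummerCoeff_succ, ← norm_mul]
        ring_nf
    _ ≤ 1 / 2 * ‖kummerCoeff a b n * z ^ n‖ := by gcongr

theorem hasSum_kummerM (a b z : ℝ) :
    HasSum (fun n => kummerCoeff a b n * z ^ n) (kummerM a b z) :=
  (summable_kummerCoeff_mul_pow a b z).hasSum

theorem differentiable_kummerM (a b : ℝ) : Differentiable ℝ (kummerM a b) :=
  differentiable_tsum_mul_pow (summable_kummerCoeff_mul_pow a b)

theorem deriv_kummerM (a b : ℝ) :
    deriv (kummerM a b) = fun z => a / b * kummerM (a + 1) (b + 1) z := by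
  ext z
  have hsum := hasSum_deriv_tsum_mul_pow (summable_kummerCoeff_mul_pow a b) z
  simp only [succ_mul_kummerCoeff_succ, mul_assoc] at hsum
  exact hsum.unique ((hasSum_kummerM (a + 1) (b + 1) z).mul_left (a / b))

theorem hasSum_mul_deriv_kummerM_add_mul (a b k z : ℝ) :
    HasSum (fun n : ℕ => (n + k) * kummerCoeff a b n * z ^ n)
      (z * deriv (kummerM a b) z + k * kummerM a b z) := by
  simpa only [kummerM_eq_tsum, add_mul, mul_assoc] using
    (hasSum_mul_deriv_tsum_mul_pow (summable_kummerCoeff_mul_pow a b) z).add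
      ((hasSum_kummerM a b z).mul_left k)

theorem mul_deriv_kummerM_add_mul (a b z : ℝ) :
    z * deriv (kummerM a b) z + a * kummerM a b z = a * kummerM (a + 1) b z := by
  have hsum := hasSum_mul_deriv_kummerM_add_mul a b a z
  simp only [add_mul_kummerCoeff, mul_assoc] at hsum
  exact hsum.unique ((hasSum_kummerM (a + 1) b z).mul_left a)

theorem mul_deriv_kummerM_add_one_add_mul {b : ℝ} (hb : ∀ m : ℕ, b ≠ -m) (a z : ℝ) :
    z * deriv (kummerM a (b + 1)) z + b * kummerM a (b + 1) z = b * kummerM a b z := by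
  have hsum := hasSum_mul_deriv_kummerM_add_mul a (b + 1) b z
  simp only [add_mul_kummerCoeff_add_one hb, mul_assoc] at hsum
  exact hsum.unique ((hasSum_kummerM a b z).mul_left b)

theorem differentiable_deriv_kummerM (a b : ℝ) : Differentiable ℝ (deriv (kummerM a b)) := by
  rw [deriv_kummerM]
  exact (differentiable_kummerM (a + 1) (b + 1)).const_mul (a / b)

theorem mul_deriv_deriv_kummerM_add_mul {b : ℝ} (hb : ∀ m : ℕ, b ≠ -m) (a z : ℝ) :
    z * deriv (deriv (kummerM a b)) z + b * deriv (kummerM a b) z = a * kummerM (a + 1) b z := by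
  have hb_zero : b ≠ 0 := by simpa using hb 0
  have hderiv_two : deriv (deriv (kummerM a b)) z =
      a / b * deriv (kummerM (a + 1) (b + 1)) z := by
    rw [deriv_kummerM, deriv_const_mul_field]
  calc z * deriv (deriv (kummerM a b)) z + b * deriv (kummerM a b) z
      = a / b * (z * deriv (kummerM (a + 1) (b + 1)) z + b * kummerM (a + 1) (b + 1) z) := by
        rw [hderiv_two, deriv_kummerM a b]
        ring
    _ = a / b * (b * kummerM (a + 1) b z) := by rw [mul_deriv_kummerM_add_one_add_mul hb]
    _ = a * kummerM (a + 1) b z := by rw [← mul_assoc, div_mul_cancel₀ a hb_zero]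

theorem statement_2_general (a : ℝ) {b : ℝ} (hb : ∀ m : ℕ, b ≠ -m) :
    Differentiable ℝ (kummerM a b) ∧
    Differentiable ℝ (deriv (kummerM a b)) ∧
    ∀ z : ℝ,
      z * deriv (deriv (kummerM a b)) z + (b - z) * deriv (kummerM a b) z
        - a * kummerM a b z = 0 := by
  refine ⟨differentiable_kummerM a b, differentiable_deriv_kummerM a b, fun z => ?_⟩
  linear_combination mul_deriv_deriv_kummerM_add_mul hb a z - mul_deriv_kummerM_add_mul a b z

/-- `w(z) = M(−α/2, 1/2, z)` is twice differentiable on `ℝ` and satisfies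
Kummer's equation `z w''(z) + (1/2 − z) w'(z) + (α/2) w(z) = 0` for all `z ∈ ℝ`. -/
theorem statement_2 (α : ℝ) :
    Differentiable ℝ (fun z : ℝ => kummerM (-α / 2) (1 / 2) z) ∧
    Differentiable ℝ (deriv (fun z : ℝ => kummerM (-α / 2) (1 / 2) z)) ∧
    ∀ z : ℝ,
      z * deriv (deriv (fun z : ℝ => kummerM (-α / 2) (1 / 2) z)) z
        + (1 / 2 - z) * deriv (fun z : ℝ => kummerM (-α / 2) (1 / 2) z) z
        + (α / 2) * kummerM (-α / 2) (1 / 2) z = 0 := by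
  have hb (m : ℕ) : (1 / 2 : ℝ) ≠ -m := by linarith [m.cast_nonneg (α := ℝ)]
  simpa [neg_div] using statement_2_general (-α / 2) hb
end

section
/- Let α > 0 and ω > 0, and define f₁(x) = 1 / U(α/2 + 1/2, 1/2, x²ω²) for x > 0. Then f₁ is strictly increasing on (0,∞), f₁(x) tends to Γ(α/2 + 1)/√π as x → 0⁺, and f₁(x) tends to +∞ as x → +∞. -/
/-!
For fixed `t > 0` the integrand `e^{-zt} t^{a-1} (1+t)^{b-a-1}` is positive, strictly decreasing in
`z`, and tends to `0` as `z → ∞`. Integrating in `t` (by dominated convergence for the limits), `U`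
inherits these properties on `z > 0`, and if `b < 1` its limit at `z = 0` is a beta integral over
the half-line, which evaluates to `U(a,b,0) = Γ(1-b) / Γ(a-b+1)`.
-/

open MeasureTheory ProbabilityTheory Set Filter Topology

section BetaIntegral

variable {a b : ℝ}

theorem integral_Ioo_rpow_mul_one_sub_rpow (ha : 0 < a) (hb : 0 < b) :
    ∫ x in Ioo (0 : ℝ) 1, x ^ (a - 1) * (1 - x) ^ (b - 1) = beta a b := by
  have hofReal : Complex.betaIntegral a b =
      ((∫ x in (0 : ℝ)..1, x ^ (a - 1) * (1 - x) ^ (b - 1) : ℝ) : ℂ) := by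
    rw [Complex.betaIntegral, ← intervalIntegral.integral_ofReal]
    refine intervalIntegral.integral_congr fun x hx => ?_
    rw [uIcc_of_le zero_le_one] at hx
    push_cast [Complex.ofReal_cpow hx.1, Complex.ofReal_cpow (sub_nonneg.2 hx.2)]
    rfl
  rw [beta_eq_betaIntegralReal a b ha hb, hofReal, Complex.ofReal_re,
    intervalIntegral.integral_of_le zero_le_one, integral_Ioc_eq_integral_Ioo]

theorem image_inv_sub_one_Ioo_zero_one : (fun u : ℝ => u⁻¹ - 1) '' Ioo 0 1 = Ioi 0 := by
  rw [← image_image (· - 1) (·⁻¹), image_inv_eq_inv, inv_Ioo_0_left one_pos, image_sub_const_Ioi]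
  simp

theorem integral_Ioi_rpow_mul_one_add_rpow (ha : 0 < a) (hb : 0 < b) :
    ∫ t in Ioi (0 : ℝ), t ^ (a - 1) * (1 + t) ^ (-(a + b)) = beta a b := by
  have hderiv : ∀ u ∈ Ioo (0 : ℝ) 1,
      HasDerivWithinAt (fun u : ℝ => u⁻¹ - 1) (-(u ^ 2)⁻¹) (Ioo 0 1) u := fun u hu =>
    ((hasDerivAt_inv hu.1.ne').sub_const 1).hasDerivWithinAt
  have hanti : AntitoneOn (fun u : ℝ => u⁻¹ - 1) (Ioo 0 1) := fun u hu v _ huv =>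
    sub_le_sub_right (inv_anti₀ hu.1 huv) 1
  have hsubst : EqOn
      (fun u : ℝ => -(-(u ^ 2)⁻¹) • ((u⁻¹ - 1) ^ (a - 1) * (1 + (u⁻¹ - 1)) ^ (-(a + b))))
      (fun u => u ^ (b - 1) * (1 - u) ^ (a - 1)) (Ioo 0 1) := by
    intro u ⟨hu0, hu1⟩
    have hinv : u⁻¹ - 1 = (1 - u) / u := by field_simp
    have hpow : u ^ (b - 1) = (u ^ 2)⁻¹ * (u ^ (a - 1))⁻¹ * u ^ (a + b) := by
      rw [← Real.rpow_two, ← Real.rpow_neg hu0.le, ← Real.rpow_neg hu0.le, ← Real.rpow_add hu0,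
        ← Real.rpow_add hu0]
      ring_nf
    simp only [neg_neg, smul_eq_mul, add_sub_cancel]
    rw [hinv, Real.div_rpow (sub_nonneg.2 hu1.le) hu0.le, Real.inv_rpow hu0.le,
      Real.rpow_neg hu0.le, inv_inv, hpow]
    ring
  rw [← image_inv_sub_one_Ioo_zero_one,
    integral_image_eq_integral_deriv_smul_of_antitoneOn measurableSet_Ioo hderiv hanti,
    setIntegral_congr_fun measurableSet_Ioo hsubst, integral_Ioo_rpow_mul_one_sub_rpow hb ha,
    beta, beta, mul_comm, add_comm]

theorem integrableOn_Ioi_rpow_mul_one_add_rpow (ha : 0 < a) (hb : 0 < b) :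
    IntegrableOn (fun t : ℝ => t ^ (a - 1) * (1 + t) ^ (-(a + b))) (Ioi 0) :=
  .of_integral_ne_zero <| by
    rw [integral_Ioi_rpow_mul_one_add_rpow ha hb]
    exact (beta_pos ha hb).ne'

end BetaIntegral

theorem setIntegral_pos_of_forall_pos {X : Type*} [MeasurableSpace X] {μ : Measure X} {s : Set X}
    {f : X → ℝ} (hs : MeasurableSet s) (hμ : μ s ≠ 0) (hf : IntegrableOn f s μ)
    (hpos : ∀ x ∈ s, 0 < f x) : 0 < ∫ x in s, f x ∂μ := by
  rw [setIntegral_pos_iff_support_of_nonneg_ae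
    (ae_restrict_of_forall_mem hs fun x hx => (hpos x hx).le) hf]
  have hsupport : s ⊆ Function.support f ∩ s := fun x hx => ⟨(hpos x hx).ne', hx⟩
  exact hμ.bot_lt.trans_le (measure_mono hsupport)

theorem exp_neg_mul_mul_one_add_rpow_le {z t : ℝ} (hz : 0 < z) (ht : 0 ≤ t) (b : ℝ) :
    Real.exp (-z * t) * (1 + t) ^ b ≤ Real.exp z * (⌈b⌉₊.factorial / z ^ ⌈b⌉₊) := by
  have hpow : (1 + t) ^ b ≤ (1 + t) ^ ⌈b⌉₊ := by
    rw [← Real.rpow_natCast]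
    exact Real.rpow_le_rpow_of_exponent_le (by linarith) (Nat.le_ceil b)
  have hexp : (z * (1 + t)) ^ ⌈b⌉₊ / ⌈b⌉₊.factorial ≤ Real.exp (z * (1 + t)) :=
    Real.pow_div_factorial_le_exp _ (by positivity) _
  calc Real.exp (-z * t) * (1 + t) ^ b
      ≤ Real.exp (-z * t) * (1 + t) ^ ⌈b⌉₊ := by gcongr
    _ = Real.exp (-z * t) * ((z * (1 + t)) ^ ⌈b⌉₊ / ⌈b⌉₊.factorial) *
          (⌈b⌉₊.factorial / z ^ ⌈b⌉₊) := by
        rw [mul_pow]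
        field_simp
    _ ≤ Real.exp (-z * t) * Real.exp (z * (1 + t)) * (⌈b⌉₊.factorial / z ^ ⌈b⌉₊) := by gcongr
    _ = Real.exp z * (⌈b⌉₊.factorial / z ^ ⌈b⌉₊) := by
        rw [← Real.exp_add]
        ring_nf

/-- The integrand, as a function of `t`, of the integral representation of `U(a,b,z)`. -/
noncomputable def tricomiIntegrand (a b z t : ℝ) : ℝ :=
  Real.exp (-z * t) * t ^ (a - 1) * (1 + t) ^ (b - a - 1)

section Tricomi

variable {a b z t : ℝ}

theorem tricomiU_eq_integral_tricomiIntegrand (a b z : ℝ) :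
    tricomiU a b z = 1 / Real.Gamma a * ∫ t in Ioi 0, tricomiIntegrand a b z t :=
  rfl

theorem measurable_tricomiIntegrand (a b z : ℝ) : Measurable (tricomiIntegrand a b z) := by
  unfold tricomiIntegrand
  fun_prop

theorem tricomiIntegrand_pos (ht : 0 < t) : 0 < tricomiIntegrand a b z t := by
  unfold tricomiIntegrand
  positivity

theorem strictAnti_tricomiIntegrand (ht : 0 < t) :
    StrictAnti fun z => tricomiIntegrand a b z t := fun z w hzw => by
  dsimp only [tricomiIntegrand]
  gcongr

theorem tricomiIntegrand_zero (a b t : ℝ) :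
    tricomiIntegrand a b 0 t = t ^ (a - 1) * (1 + t) ^ (-(a + (1 - b))) := by
  rw [tricomiIntegrand, neg_zero, zero_mul, Real.exp_zero, one_mul]
  ring_nf

theorem integrableOn_tricomiIntegrand_zero (ha : 0 < a) (hb : b < 1) :
    IntegrableOn (tricomiIntegrand a b 0) (Ioi 0) := by
  rw [funext (tricomiIntegrand_zero a b)]
  exact integrableOn_Ioi_rpow_mul_one_add_rpow ha (sub_pos.2 hb)

-- Half-line beta integrability covers `b = 0`; the remaining factor `e^{-zt} (1+t)^b` is bounded.
theorem integrableOn_tricomiIntegrand (ha : 0 < a) (hz : 0 < z) :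
    IntegrableOn (tricomiIntegrand a b z) (Ioi 0) := by
  refine Integrable.mono' ((integrableOn_tricomiIntegrand_zero ha zero_lt_one).const_mul
    (Real.exp z * (⌈b⌉₊.factorial / z ^ ⌈b⌉₊)))
    (measurable_tricomiIntegrand a b z).aestronglyMeasurable
    (ae_restrict_of_forall_mem measurableSet_Ioi fun t (ht : 0 < t) => ?_)
  have hfactor : tricomiIntegrand a b z t =
      Real.exp (-z * t) * (1 + t) ^ b * tricomiIntegrand a 0 0 t := by
    rw [tricomiIntegrand, tricomiIntegrand_zero, show b - a - 1 = b + -(a + (1 - 0)) by ring,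
      Real.rpow_add (by positivity)]
    ring
  rw [Real.norm_of_nonneg (tricomiIntegrand_pos ht).le, hfactor]
  exact mul_le_mul_of_nonneg_right (exp_neg_mul_mul_one_add_rpow_le hz ht.le b)
    (tricomiIntegrand_pos ht).le

theorem tricomiU_pos (ha : 0 < a) (hz : 0 < z) : 0 < tricomiU a b z :=
  mul_pos (one_div_pos.2 (Real.Gamma_pos_of_pos ha)) <|
    setIntegral_pos_of_forall_pos measurableSet_Ioi (by simp) (integrableOn_tricomiIntegrand ha hz)
      fun _ ht => tricomiIntegrand_pos ht

theorem strictAntiOn_tricomiU (ha : 0 < a) : StrictAntiOn (tricomiU a b) (Ioi 0) := by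
  intro z hz w hw hzw
  have hintz := integrableOn_tricomiIntegrand (b := b) ha hz
  have hintw := integrableOn_tricomiIntegrand (b := b) ha hw
  rw [tricomiU_eq_integral_tricomiIntegrand, tricomiU_eq_integral_tricomiIntegrand]
  refine mul_lt_mul_of_pos_left ?_ (one_div_pos.2 (Real.Gamma_pos_of_pos ha))
  rw [← sub_pos, ← integral_sub hintz hintw]
  exact setIntegral_pos_of_forall_pos measurableSet_Ioi (by simp) (hintz.sub hintw)
    fun t ht => sub_pos.2 (strictAnti_tricomiIntegrand ht hzw)

theorem tricomiU_zero (ha : 0 < a) (hb : b < 1) :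
    tricomiU a b 0 = Real.Gamma (1 - b) / Real.Gamma (a - b + 1) := by
  have hΓ := (Real.Gamma_pos_of_pos ha).ne'
  simp only [tricomiU_eq_integral_tricomiIntegrand, tricomiIntegrand_zero]
  rw [integral_Ioi_rpow_mul_one_add_rpow ha (sub_pos.2 hb), beta,
    show a + (1 - b) = a - b + 1 by ring]
  field_simp

theorem tendsto_tricomiU_of_tendsto_tricomiIntegrand {l : Filter ℝ} [l.IsCountablyGenerated]
    {z₀ : ℝ} {g : ℝ → ℝ} (hint : IntegrableOn (tricomiIntegrand a b z₀) (Ioi 0))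
    (hl : ∀ᶠ z in l, z₀ ≤ z)
    (hg : ∀ t ∈ Ioi 0, Tendsto (fun z => tricomiIntegrand a b z t) l (𝓝 (g t))) :
    Tendsto (tricomiU a b) l (𝓝 (1 / Real.Gamma a * ∫ t in Ioi 0, g t)) := by
  refine (tendsto_integral_filter_of_dominated_convergence (tricomiIntegrand a b z₀)
    (.of_forall fun z => (measurable_tricomiIntegrand a b z).aestronglyMeasurable) ?_ hint
    (ae_restrict_of_forall_mem measurableSet_Ioi hg)).const_mul _
  filter_upwards [hl] with z hz
  refine ae_restrict_of_forall_mem measurableSet_Ioi fun t ht => ?_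
  rw [Real.norm_of_nonneg (tricomiIntegrand_pos ht).le]
  exact (strictAnti_tricomiIntegrand ht).antitone hz

theorem tendsto_tricomiU_nhdsGT_zero (ha : 0 < a) (hb : b < 1) :
    Tendsto (tricomiU a b) (𝓝[>] 0) (𝓝 (Real.Gamma (1 - b) / Real.Gamma (a - b + 1))) := by
  rw [← tricomiU_zero ha hb]
  refine tendsto_tricomiU_of_tendsto_tricomiIntegrand (integrableOn_tricomiIntegrand_zero ha hb)
    (eventually_mem_nhdsWithin.mono fun _ hz => le_of_lt hz) fun t _ => ?_
  have hcont : Continuous fun z => tricomiIntegrand a b z t := by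
    unfold tricomiIntegrand
    fun_prop
  exact (hcont.tendsto 0).mono_left nhdsWithin_le_nhds

theorem tendsto_tricomiU_atTop (ha : 0 < a) : Tendsto (tricomiU a b) atTop (𝓝 0) := by
  have hlim : ∀ t ∈ Ioi (0 : ℝ), Tendsto (fun z => tricomiIntegrand a b z t) atTop (𝓝 0) := by
    intro t ht
    have hexp : Tendsto (fun z => Real.exp (-z * t)) atTop (𝓝 0) :=
      Real.tendsto_exp_atBot.comp (tendsto_neg_atTop_atBot.atBot_mul_const ht)
    simpa only [tricomiIntegrand, zero_mul] using
      (hexp.mul_const (t ^ (a - 1))).mul_const ((1 + t) ^ (b - a - 1))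
  simpa using tendsto_tricomiU_of_tendsto_tricomiIntegrand
    (integrableOn_tricomiIntegrand ha one_pos) (eventually_ge_atTop 1) hlim

end Tricomi

theorem statement_7_general {a b ω : ℝ} (ha : 0 < a) (hb : b < 1) (hω : ω ≠ 0) {f₁ : ℝ → ℝ}
    (hf₁ : ∀ x : ℝ, 0 < x → f₁ x = 1 / tricomiU a b (x ^ 2 * ω ^ 2)) :
    StrictMonoOn f₁ (Ioi 0) ∧
    Tendsto f₁ (𝓝[>] 0) (𝓝 (Real.Gamma (a - b + 1) / Real.Gamma (1 - b))) ∧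
    Tendsto f₁ atTop atTop := by
  have harg : ∀ {x : ℝ}, 0 < x → 0 < x ^ 2 * ω ^ 2 := fun hx => by positivity
  refine ⟨fun x (hx : 0 < x) y (hy : 0 < y) hxy => ?_, ?_, ?_⟩
  · rw [hf₁ x hx, hf₁ y hy]
    exact one_div_lt_one_div_of_lt (tricomiU_pos ha (harg hy))
      (strictAntiOn_tricomiU ha (harg hx) (harg hy) (by gcongr))
  · have harg_zero : Tendsto (fun x : ℝ => x ^ 2 * ω ^ 2) (𝓝[>] 0) (𝓝[>] 0) := by
      refine tendsto_nhdsWithin_iff.2 ⟨?_, eventually_mem_nhdsWithin.mono fun x hx => harg hx⟩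
      exact (Continuous.tendsto' (by fun_prop) 0 0 (by simp)).mono_left nhdsWithin_le_nhds
    have hlim_ne : Real.Gamma (1 - b) / Real.Gamma (a - b + 1) ≠ 0 :=
      (div_pos (Real.Gamma_pos_of_pos (by linarith)) (Real.Gamma_pos_of_pos (by linarith))).ne'
    rw [← inv_div]
    refine (((tendsto_tricomiU_nhdsGT_zero ha hb).comp harg_zero).inv₀ hlim_ne).congr' ?_
    filter_upwards [self_mem_nhdsWithin] with x hx
    rw [hf₁ x hx, one_div, Function.comp_apply]
  · have harg_top : Tendsto (fun x : ℝ => x ^ 2 * ω ^ 2) atTop atTop :=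
      (tendsto_pow_atTop two_ne_zero).atTop_mul_const (by positivity)
    have hU : Tendsto (tricomiU a b) atTop (𝓝[>] 0) :=
      tendsto_nhdsWithin_iff.2 ⟨tendsto_tricomiU_atTop ha,
        (eventually_gt_atTop 0).mono fun z hz => tricomiU_pos ha hz⟩
    refine (hU.comp harg_top).inv_tendsto_nhdsGT_zero.congr' ?_
    filter_upwards [eventually_gt_atTop 0] with x hx
    rw [hf₁ x hx, one_div, Pi.inv_apply, Function.comp_apply]

/-- `f₁(x) = 1/U(α/2+1/2, 1/2, x²ω²)` is strictly increasing on `(0,∞)`,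
tends to `Γ(α/2+1)/√π` as `x → 0⁺`, and tends to `+∞` as `x → +∞`. -/
theorem statement_7 (α ω : ℝ) (hα : 0 < α) (hω : 0 < ω)
    (f₁ : ℝ → ℝ)
    (hf₁ : ∀ x : ℝ, 0 < x → f₁ x = 1 / tricomiU (α / 2 + 1 / 2) (1 / 2) (x ^ 2 * ω ^ 2)) :
    StrictMonoOn f₁ (Set.Ioi 0) ∧
    Filter.Tendsto f₁ (nhdsWithin 0 (Set.Ioi 0))
      (nhds (Real.Gamma (α / 2 + 1) / Real.sqrt Real.pi)) ∧
    Filter.Tendsto f₁ Filter.atTop Filter.atTop := by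
  have h := statement_7_general (by positivity) one_half_lt_one hω.ne' hf₁
  rwa [add_sub_cancel_right, sub_half, Real.Gamma_one_half_eq] at h
end
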